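/- The set of real numbers {B(α,ρ) : α∈Δ, ρ∈Φ⁺, |B(α,ρ)| < 1} is finite. -/

import Mathlib

/-!
If `α` and `ρ` are roots with `|B(α,ρ)| < 1`, the product of the reflections along them is a
rotation of the plane they span, so some power of it brings `α` back so close to itself that both
this power and its inverse send `α` to positive roots (taking `α` simple, as we may). The sum of
these two positive roots is a multiple of `α`, which forces them to equal `α`. Hence the rotation
has finite order. Averaging the height over the finite cyclic group it generates gives an invariant
functional; invariance makes it vanish on `α` and `ρ`, and it is nonpositive on only finitely many
positive roots, since each element of `W` has finitely many inversions. Moving this functional into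
the fundamental chamber moves `α` and `ρ` into a finite standard parabolic subsystem. There are
finitely many of these, and `W` preserves `B`.
-/

open Filter Topology

noncomputable section

variable {ι V : Type*} [Fintype ι] [NormedAddCommGroup V] [NormedSpace ℝ V]

/-- The set of simple `B`-reflections: the linear automorphisms of `V` given by the
`B`-reflection formula `u ↦ u - 2 (B α u / B α α) • α` associated to a simple root `α ∈ Δ`. -/
def simpleReflections (B : LinearMap.BilinForm ℝ V) (Δ : Module.Basis ι ℝ V) :
    Set (V ≃ₗ[ℝ] V) :=
  { e | ∃ i : ι, ∀ u : V, e u = u - (2 * B (Δ i) u / B (Δ i) (Δ i)) • Δ i }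

/-- The geometric Coxeter group `W`: the subgroup of linear automorphisms of `V`
generated by the simple `B`-reflections. -/
def cox (B : LinearMap.BilinForm ℝ V) (Δ : Module.Basis ι ℝ V) : Subgroup (V ≃ₗ[ℝ] V) :=
  Subgroup.closure (simpleReflections B Δ)

/-- The root system `Φ = W ⬝ Δ`. -/
def Phi (B : LinearMap.BilinForm ℝ V) (Δ : Module.Basis ι ℝ V) : Set V :=
  { ρ | ∃ w ∈ cox B Δ, ∃ i : ι, w (Δ i) = ρ }

/-- The positive roots `Φ⁺ = Φ ∩ cone(Δ)`. -/
def posPhi (B : LinearMap.BilinForm ℝ V) (Δ : Module.Basis ι ℝ V) : Set V :=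
  { ρ ∈ Phi B Δ | ∀ i : ι, 0 ≤ Δ.repr ρ i }

/-- `|v|₁`: the sum of the coordinates of `v` in the basis `Δ`. -/
def l1 (Δ : Module.Basis ι ℝ V) (v : V) : ℝ := ∑ i : ι, Δ.repr v i

/-- The normalization map `v ↦ v̂ = v / |v|₁`. -/
def nrm (Δ : Module.Basis ι ℝ V) (v : V) : V := (l1 Δ v)⁻¹ • v

/-- The set `Φ̂` of normalized roots. -/
def nPhi (B : LinearMap.BilinForm ℝ V) (Δ : Module.Basis ι ℝ V) : Set V :=
  nrm Δ '' posPhi B Δ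

/-- `E(Φ)`: the set of accumulation points of the set of normalized roots. -/
def Eset (B : LinearMap.BilinForm ℝ V) (Δ : Module.Basis ι ℝ V) : Set V :=
  { x | AccPt x (𝓟 (nPhi B Δ)) }

/-- The isotropic cone `Q` of `B`. -/
def isoQ (B : LinearMap.BilinForm ℝ V) : Set V := { v | B v v = 0 }

section Reflections

open Polynomial.Chebyshev

variable {K E : Type*} [Field K] [AddCommGroup E] [Module K E]
variable {B : LinearMap.BilinForm K E} {a b v : E}

/-- The reflection `u ↦ u - (2 * B v u / B v v) • v` along `v` with respect to the bilinear form
`B`, as a linear automorphism. For `B v v = 0` the division convention makes it the identity. -/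
def formReflection (B : LinearMap.BilinForm K E) (v : E) : E ≃ₗ[K] E :=
  .ofInvolutive (Module.preReflection v ((2 / B v v) • B v)) <| by
    by_cases hv : B v v = 0
    · intro u
      simp [Module.preReflection_apply, hv]
    · exact Module.involutive_preReflection (by simp [hv])

theorem formReflection_apply (B : LinearMap.BilinForm K E) (v u : E) :
    formReflection B v u = u - (2 * B v u / B v v) • v := by
  change u - ((2 / B v v) • B v) u • v = _
  rw [LinearMap.smul_apply, smul_eq_mul, div_mul_eq_mul_div]

theorem formReflection_formReflection_apply (B : LinearMap.BilinForm K E) (v u : E) :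
    formReflection B v (formReflection B v u) = u :=
  (formReflection B v).symm_apply_apply u

theorem formReflection_mul_self (B : LinearMap.BilinForm K E) (v : E) :
    formReflection B v * formReflection B v = 1 :=
  LinearEquiv.ext (formReflection_formReflection_apply B v)

theorem formReflection_inv (B : LinearMap.BilinForm K E) (v : E) :
    (formReflection B v)⁻¹ = formReflection B v :=
  inv_eq_of_mul_eq_one_left (formReflection_mul_self B v)

theorem formReflection_apply_of_norm_one (hv : B v v = 1) (u : E) :
    formReflection B v u = u - (2 * B v u) • v := by
  rw [formReflection_apply, hv, div_one]

theorem formReflection_apply_self (hv : B v v = 1) : formReflection B v v = -v := by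
  rw [formReflection_apply_of_norm_one hv, hv]
  module

theorem formReflection_apply_of_orthogonal {u : E} (hu : B v u = 0) : formReflection B v u = u := by
  simp [formReflection_apply, hu]

/-- The isometry group of a bilinear form. -/
def isometrySubgroup (B : LinearMap.BilinForm K E) : Subgroup (E ≃ₗ[K] E) where
  carrier := {g | ∀ x y, B (g x) (g y) = B x y}
  one_mem' _ _ := rfl
  mul_mem' hg hh x y := (hg _ _).trans (hh x y)
  inv_mem' {g} hg x y := by
    simpa using (hg (g⁻¹ x) (g⁻¹ y)).symm

theorem formReflection_mem_isometrySubgroup (hB : B.IsSymm) (v : E) :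
    formReflection B v ∈ isometrySubgroup B := by
  intro x y
  by_cases hv : B v v = 0
  · simp [formReflection_apply, hv]
  · simp only [formReflection_apply, map_sub, map_smul, LinearMap.sub_apply, LinearMap.smul_apply,
      smul_eq_mul, hB.eq x v]
    field_simp
    ring

theorem formReflection_map {g : E ≃ₗ[K] E} (hg : g ∈ isometrySubgroup B) (v : E) :
    formReflection B (g v) = g * formReflection B v * g⁻¹ := by
  ext u
  obtain ⟨u, rfl⟩ := g.surjective u
  simp [formReflection_apply, hg v _, LinearEquiv.mul_apply]

/-- The product of the reflections along `a` and `b`, which generates the rotation part of the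
dihedral group they generate. -/
def formRotation (B : LinearMap.BilinForm K E) (a b : E) : E ≃ₗ[K] E :=
  formReflection B a * formReflection B b

theorem formRotation_apply (B : LinearMap.BilinForm K E) (a b u : E) :
    formRotation B a b u = formReflection B a (formReflection B b u) :=
  rfl

theorem formRotation_mem_isometrySubgroup (hB : B.IsSymm) (a b : E) :
    formRotation B a b ∈ isometrySubgroup B :=
  mul_mem (formReflection_mem_isometrySubgroup hB a) (formReflection_mem_isometrySubgroup hB b)

theorem formRotation_inv (B : LinearMap.BilinForm K E) (a b : E) :
    (formRotation B a b)⁻¹ = formRotation B b a := by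
  simp only [formRotation, mul_inv_rev, formReflection_inv]

theorem formReflection_mul_formRotation_zpow_mul (B : LinearMap.BilinForm K E) (a b : E) (k : ℤ) :
    formReflection B a * formRotation B a b ^ k * formReflection B a =
      formRotation B a b ^ (-k) := by
  have h : MulAut.conj (formReflection B a) (formRotation B a b) = (formRotation B a b)⁻¹ := by
    rw [formRotation_inv, MulAut.conj_apply, formReflection_inv, formRotation, ← mul_assoc,
      formReflection_mul_self, one_mul, formRotation]
  rw [zpow_neg, ← inv_zpow, ← h, ← map_zpow, MulAut.conj_apply, formReflection_inv]

theorem formReflection_apply_chebyshev_right (hB : B.IsSymm) (hb : B b b = 1) (k : ℤ) :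
    formReflection B b ((U K (k + 1)).eval (-B a b) • a + (U K k).eval (-B a b) • b) =
      (U K (k + 1)).eval (-B a b) • a + (U K (k + 2)).eval (-B a b) • b := by
  rw [map_add, map_smul, map_smul, formReflection_apply_self hb,
    formReflection_apply_of_norm_one hb, U_add_two, hB.eq b a]
  simp only [Polynomial.eval_sub, Polynomial.eval_mul, Polynomial.eval_ofNat, Polynomial.eval_X]
  module

theorem formReflection_apply_chebyshev_left (ha : B a a = 1) (k : ℤ) :
    formReflection B a ((U K k).eval (-B a b) • a + (U K (k + 1)).eval (-B a b) • b) =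
      (U K (k + 2)).eval (-B a b) • a + (U K (k + 1)).eval (-B a b) • b := by
  rw [map_add, map_smul, map_smul, formReflection_apply_self ha,
    formReflection_apply_of_norm_one ha, U_add_two]
  simp only [Polynomial.eval_sub, Polynomial.eval_mul, Polynomial.eval_ofNat, Polynomial.eval_X]
  module

theorem formRotation_apply_chebyshev (hB : B.IsSymm) (ha : B a a = 1) (hb : B b b = 1) (k : ℤ) :
    formRotation B a b ((U K k).eval (-B a b) • a + (U K (k - 1)).eval (-B a b) • b) =
      (U K (k + 2)).eval (-B a b) • a + (U K (k + 1)).eval (-B a b) • b := by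
  have := formReflection_apply_chebyshev_right (a := a) hB hb (k - 1)
  rw [formRotation_apply, ← formReflection_apply_chebyshev_left ha]
  ring_nf at this ⊢
  rw [this]

theorem formRotation_zpow_apply_left (hB : B.IsSymm) (ha : B a a = 1) (hb : B b b = 1) (k : ℤ) :
    (formRotation B a b ^ k) a =
      (U K (2 * k)).eval (-B a b) • a + (U K (2 * k - 1)).eval (-B a b) • b := by
  induction k with
  | zero => simp
  | succ k ih =>
    rw [add_comm, zpow_one_add, LinearEquiv.mul_apply, ih, formRotation_apply_chebyshev hB ha hb]
    ring_nf
  | pred k ih =>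
    rw [sub_eq_neg_add, zpow_add, zpow_neg_one, LinearEquiv.mul_apply, ih]
    refine (LinearEquiv.symm_apply_eq _).2 ?_
    rw [formRotation_apply_chebyshev hB ha hb]
    ring_nf

theorem formRotation_zpow_apply_add_zpow_neg_apply (hB : B.IsSymm) (ha : B a a = 1)
    (hb : B b b = 1) (k : ℤ) :
    (formRotation B a b ^ k) a + (formRotation B a b ^ (-k)) a =
      ((U K (2 * k)).eval (-B a b) + (U K (2 * (-k))).eval (-B a b)) • a := by
  have h : U K (2 * (-k) - 1) = -U K (2 * k - 1) := by rw [mul_neg, U_neg_sub_one]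
  rw [formRotation_zpow_apply_left hB ha hb, formRotation_zpow_apply_left hB ha hb, h,
    Polynomial.eval_neg]
  module

/-- If `B a b ^ 2 ≠ 1` then the form is nondegenerate on the plane spanned by `a` and `b`, so the
whole space is the sum of this plane and its orthogonal complement. -/
theorem exists_orthogonal_decomposition (hB : B.IsSymm) (ha : B a a = 1) (hb : B b b = 1)
    (hab : B a b ^ 2 ≠ 1) (v : E) :
    ∃ (x y : K) (q : E), B a q = 0 ∧ B b q = 0 ∧ v = x • a + y • b + q := by
  have hdet : 1 - B a b ^ 2 ≠ 0 := sub_ne_zero.2 hab.symm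
  let x := (B a v - B a b * B b v) / (1 - B a b ^ 2)
  let y := (B b v - B a b * B a v) / (1 - B a b ^ 2)
  refine ⟨x, y, v - x • a - y • b, ?_, ?_, by module⟩
  all_goals
    simp only [x, y, map_sub, map_smul, smul_eq_mul, ha, hb, hB.eq b a]
    field_simp
    ring

theorem formRotation_zpow_eq_one_of_apply_eq (hB : B.IsSymm) (ha : B a a = 1) (hb : B b b = 1)
    (hab : B a b ^ 2 ≠ 1) {k : ℤ} (hka : (formRotation B a b ^ k) a = a)
    (hkb : (formRotation B a b ^ k) b = b) : formRotation B a b ^ k = 1 := by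
  ext v
  obtain ⟨x, y, q, haq, hbq, rfl⟩ := exists_orthogonal_decomposition hB ha hb hab v
  have hq : formRotation B a b ∈ MulAction.stabilizer (E ≃ₗ[K] E) q := by
    rw [MulAction.mem_stabilizer_iff, LinearEquiv.smul_def, formRotation_apply,
      formReflection_apply_of_orthogonal hbq, formReflection_apply_of_orthogonal haq]
  have hkq : (formRotation B a b ^ k) q = q := zpow_mem hq k
  simp [hka, hkb, hkq]

theorem formRotation_zpow_two_mul_eq_one (hB : B.IsSymm) {k : ℤ}
    (hka : (formRotation B a b ^ k) a = a) : formRotation B a b ^ (2 * k) = 1 := by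
  have hconj := formReflection_map
    (zpow_mem (formRotation_mem_isometrySubgroup hB a b) k) a
  rw [hka, eq_mul_inv_iff_mul_eq] at hconj
  have hinv := formReflection_mul_formRotation_zpow_mul B a b k
  rw [hconj, mul_assoc, formReflection_mul_self, mul_one, zpow_neg] at hinv
  rw [two_mul, zpow_add]
  exact mul_eq_one_iff_eq_inv.2 hinv

theorem apply_eq_zero_of_formRotation_invariant [NeZero (2 : K)] (hB : B.IsSymm) (ha : B a a = 1)
    (hb : B b b = 1) (hab : B a b ^ 2 ≠ 1) {y : Module.Dual K E}
    (hy : ∀ v, y (formRotation B a b v) = y v) : y a = 0 ∧ y b = 0 := by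
  have hrefl (u : E) : B a u * y a = B b u * y b := by
    have h := hy (formReflection B b u)
    rw [formRotation_apply, formReflection_formReflection_apply,
      formReflection_apply_of_norm_one ha, formReflection_apply_of_norm_one hb] at h
    simp only [map_sub, map_smul, smul_eq_mul, sub_right_inj, mul_assoc] at h
    exact mul_left_cancel₀ two_ne_zero h
  have hya : y a = B a b * y b := by simpa only [ha, one_mul, hB.eq b a] using hrefl a
  have hyb : B a b * y a = y b := by simpa only [hb, one_mul] using hrefl b
  have hya₀ : y a = 0 := by
    have h : (B a b ^ 2 - 1) * y a = 0 := by linear_combination B a b * hyb - hya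
    exact (mul_eq_zero.1 h).resolve_left (sub_ne_zero.2 hab)
  exact ⟨hya₀, by rw [← hyb, hya₀, mul_zero]⟩

end Reflections

section Angles

open Polynomial.Chebyshev

theorem chebyshevU_eval_nonneg_of_one_le {R : Type*} [CommRing R] [LinearOrder R]
    [IsStrictOrderedRing R] {x : R} (hx : 1 ≤ x) {k : ℤ} (hk : -1 ≤ k) : 0 ≤ (U R k).eval x := by
  have h (n : ℕ) : 0 ≤ (U R (n - 1)).eval x ∧ (U R (n - 1)).eval x ≤ (U R n).eval x := by
    induction n with
    | zero => simp
    | succ n ih =>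
      push_cast
      rw [add_sub_cancel_right, U_add_one]
      simp only [Polynomial.eval_sub, Polynomial.eval_mul, Polynomial.eval_ofNat,
        Polynomial.eval_X]
      exact ⟨ih.1.trans ih.2, by nlinarith [ih.1, ih.2]⟩
  obtain ⟨n, hn⟩ := Int.eq_ofNat_of_zero_le (neg_le_iff_add_nonneg.1 hk)
  simpa only [← hn, add_sub_cancel_right] using (h n).1

theorem sin_pi_div_pos {m : ℕ} (hm : 2 ≤ m) : 0 < Real.sin (Real.pi / m) := by
  have hm' : (2 : ℝ) ≤ m := mod_cast hm
  have := Real.pi_pos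
  refine Real.sin_pos_of_pos_of_lt_pi (by positivity) ?_
  rw [div_lt_iff₀ (by positivity)]
  nlinarith

theorem chebyshevU_eval_cos_pi_div_nonneg {m : ℕ} (hm : 2 ≤ m) {k : ℤ} (hk : -1 ≤ k)
    (hkm : k + 1 ≤ m) : 0 ≤ (U ℝ k).eval (Real.cos (Real.pi / m)) := by
  have hk' : (0 : ℝ) ≤ k + 1 := by exact_mod_cast neg_le_iff_add_nonneg.1 hk
  have hkm' : (k + 1 : ℝ) ≤ m := by exact_mod_cast hkm
  have hm' : (0 : ℝ) < m := by positivity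
  refine nonneg_of_mul_nonneg_left (b := Real.sin (Real.pi / m)) ?_ (sin_pi_div_pos hm)
  rw [U_real_cos]
  refine Real.sin_nonneg_of_nonneg_of_le_pi (mul_nonneg hk' (by positivity)) ?_
  rw [mul_div_left_comm]
  exact mul_le_of_le_one_right Real.pi_pos.le ((div_le_one hm').2 hkm')

theorem chebyshevU_two_mul_eval_cos_pi_div {m : ℕ} (hm : 2 ≤ m) :
    (U ℝ (2 * m)).eval (Real.cos (Real.pi / m)) = 1 := by
  refine mul_right_cancel₀ (sin_pi_div_pos hm).ne' ?_
  rw [U_real_cos, one_mul, ← Real.sin_add_two_pi (Real.pi / m)]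
  congr 1
  push_cast
  field

theorem chebyshevU_two_mul_sub_one_eval_cos_pi_div {m : ℕ} (hm : 2 ≤ m) :
    (U ℝ (2 * m - 1)).eval (Real.cos (Real.pi / m)) = 0 := by
  refine mul_right_cancel₀ (sin_pi_div_pos hm).ne' ?_
  rw [U_real_cos, zero_mul, ← Real.sin_two_pi]
  congr 1
  push_cast
  field

variable {E : Type*} [AddCommGroup E] [Module ℝ E] {B : LinearMap.BilinForm ℝ E} {a b : E}

theorem formRotation_pow_eq_one (hB : B.IsSymm) (ha : B a a = 1) (hb : B b b = 1) {m : ℕ}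
    (hm : 2 ≤ m) (hab : B a b = -Real.cos (Real.pi / m)) : formRotation B a b ^ m = 1 := by
  have hfix {c d : E} (hc : B c c = 1) (hd : B d d = 1) (hcd : B c d = -Real.cos (Real.pi / m)) :
      (formRotation B c d ^ (m : ℤ)) c = c := by
    rw [formRotation_zpow_apply_left hB hc hd, hcd, neg_neg, chebyshevU_two_mul_eval_cos_pi_div hm,
      chebyshevU_two_mul_sub_one_eval_cos_pi_div hm]
    module
  have hab' : B a b ^ 2 ≠ 1 := by
    rw [hab, neg_sq]
    nlinarith [sin_pi_div_pos hm, Real.sin_sq_add_cos_sq (Real.pi / m)]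
  rw [← zpow_natCast]
  refine formRotation_zpow_eq_one_of_apply_eq hB ha hb hab' (hfix ha hb hab) ?_
  rw [← formRotation_inv, inv_zpow]
  exact (LinearEquiv.symm_apply_eq _).2 (hfix hb ha (hab ▸ hB.eq b a)).symm

/-- The rotation turns by the angle `2θ`, and the multiples of an angle accumulate at `0`. -/
theorem exists_formRotation_zpow_apply_pos (hB : B.IsSymm) (ha : B a a = 1) (hb : B b b = 1)
    (hab : |B a b| < 1) {L : Module.Dual ℝ E} (hL : 0 < L a) :
    ∃ n : ℕ, 0 < n ∧ 0 < L ((formRotation B a b ^ (n : ℤ)) a) ∧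
      0 < L ((formRotation B a b ^ (-n : ℤ)) a) := by
  obtain ⟨hlt, hgt⟩ := abs_lt.1 hab
  let θ : ℝ := Real.arccos (-B a b)
  have hcos : Real.cos θ = -B a b := Real.cos_arccos (by linarith) (by linarith)
  have hsin : 0 < Real.sin θ := by
    rw [Real.sin_arccos]
    exact Real.sqrt_pos.2 (by nlinarith)
  let F (η : Real.Angle) : ℝ := (η + θ).sin * L a + η.sin * L b
  have hF (k : ℤ) :
      Real.sin θ * L ((formRotation B a b ^ k) a) = F (k • ((2 * θ : ℝ) : Real.Angle)) := by
    simp only [F, ← Real.Angle.coe_zsmul, ← Real.Angle.coe_add, Real.Angle.sin_coe, zsmul_eq_mul]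
    rw [formRotation_zpow_apply_left hB ha hb, ← hcos, map_add, map_smul, map_smul, smul_eq_mul,
      smul_eq_mul, mul_add, ← mul_assoc, ← mul_assoc, mul_comm (Real.sin θ),
      mul_comm (Real.sin θ), U_real_cos, U_real_cos]
    push_cast
    ring_nf
  have hev : ∀ᶠ η in 𝓝 (0 : Real.Angle), 0 < F η ∧ 0 < F (-η) := by
    have hcont : Continuous F := by
      have := Real.Angle.continuous_sin
      fun_prop
    have hF₀ : 0 < F 0 := by simpa [F] using mul_pos hsin hL
    have h := hcont.continuousAt.eventually (lt_mem_nhds hF₀)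
    exact h.and ((continuous_neg.tendsto' _ _ neg_zero).eventually h)
  have : Fact (0 < 2 * Real.pi) := ⟨Real.two_pi_pos⟩
  have : CompactSpace Real.Angle := inferInstanceAs (CompactSpace (AddCircle (2 * Real.pi)))
  obtain ⟨n, ⟨hn, hn'⟩, hn₀⟩ :=
    (((mapClusterPt_zero_atTop_nsmul ((2 * θ : ℝ) : Real.Angle)).frequently hev).and_eventually
      (eventually_gt_atTop 0)).exists
  have hpos {k : ℤ} (hk : 0 < F (k • ((2 * θ : ℝ) : Real.Angle))) :
      0 < L ((formRotation B a b ^ k) a) :=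
    pos_of_mul_pos_right ((hF k).symm ▸ hk) hsin.le
  exact ⟨n, hn₀, hpos (by rwa [natCast_zsmul]), hpos (by rwa [neg_smul, natCast_zsmul])⟩

end Angles

section CosetDescent

open CoxeterSystem

variable {κ W : Type*} [Group W] {M : CoxeterMatrix κ} (cs : CoxeterSystem M W)

/-- Multiplying `w` by `t` and `s` alternately for as long as the length drops reaches the minimal
representative of the coset of `w` by the dihedral subgroup `⟨s, t⟩`. -/
theorem exists_eq_mul_wordProd_alternatingWord (w : W) {s t : κ} (hw : ¬cs.IsRightDescent w s) :
    ∃ (v : W) (k : ℕ), w = v * cs.wordProd (alternatingWord s t k) ∧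
      cs.length v + k = cs.length w ∧ ¬cs.IsRightDescent v s ∧ ¬cs.IsRightDescent v t := by
  induction hn : cs.length w generalizing w s t with
  | zero =>
    obtain rfl := cs.length_eq_zero_iff.1 hn
    exact ⟨1, 0, by simp [alternatingWord], by simp, hw, cs.not_isRightDescent_one t⟩
  | succ n ih =>
    by_cases ht : cs.IsRightDescent w t
    · have hlen := cs.isRightDescent_iff.1 ht
      obtain ⟨v, k, hv, hk, hvt, hvs⟩ := ih (w * cs.simple t) (t := s)
        (cs.isRightDescent_iff_not_isRightDescent_mul.1 ht) (by omega)
      refine ⟨v, k + 1, ?_, by omega, hvs, hvt⟩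
      rw [alternatingWord_succ, wordProd_concat, ← mul_assoc, ← hv,
        cs.simple_mul_simple_cancel_right]
    · exact ⟨w, 0, by simp [alternatingWord], by omega, hw, ht⟩

theorem lt_of_eq_mul_wordProd_alternatingWord {w v : W} {s t : κ} {k : ℕ}
    (hw : ¬cs.IsRightDescent w s) (hv : w = v * cs.wordProd (alternatingWord s t k))
    (hk : cs.length v + k = cs.length w) (hM : M s t ≠ 0) : k < M s t := by
  by_contra! h
  have hnot := cs.not_isReduced_alternatingWord t s (m := k + 1) (M.symmetric s t ▸ hM)
    (by rw [M.symmetric]; omega)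
  have hlen := cs.not_isRightDescent_iff.1 hw
  rw [hv, mul_assoc, ← wordProd_concat, ← alternatingWord_succ, ← hv] at hlen
  have hle := cs.length_mul_le v (cs.wordProd (alternatingWord t s (k + 1)))
  have hword := cs.length_wordProd_le (alternatingWord t s (k + 1))
  rw [length_alternatingWord] at hword
  refine hnot ?_
  rw [CoxeterSystem.IsReduced, length_alternatingWord]
  omega

end CosetDescent

section TitsForm

open CoxeterSystem Polynomial.Chebyshev

variable {κ E W : Type*} [AddCommGroup E] [Module ℝ E] [Group W]
variable {M : CoxeterMatrix κ} {B : LinearMap.BilinForm ℝ E} {Δ : Module.Basis κ ℝ E}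

/-- A symmetric form whose Gram matrix in the basis `Δ` is the one attached to the Coxeter matrix
`M`, except that an infinite bond, encoded by `M i j = 0`, may carry any value `≤ -1`. The diagonal
entries `M i i = 1` make the basis vectors unit vectors. -/
structure IsTitsForm (M : CoxeterMatrix κ) (B : LinearMap.BilinForm ℝ E)
    (Δ : Module.Basis κ ℝ E) : Prop where
  isSymm : B.IsSymm
  apply_eq_neg_cos : ∀ i j, M i j ≠ 0 → B (Δ i) (Δ j) = -Real.cos (Real.pi / M i j)
  apply_le_neg_one : ∀ i j, M i j = 0 → B (Δ i) (Δ j) ≤ -1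

theorem exists_isTitsForm (hB : B.IsSymm) (hdiag : ∀ i, B (Δ i) (Δ i) = 1)
    (hoff : ∀ i j, i ≠ j → B (Δ i) (Δ j) ≤ -1 ∨
      ∃ k : ℕ, 2 ≤ k ∧ B (Δ i) (Δ j) = -Real.cos (Real.pi / (k : ℝ))) :
    ∃ M : CoxeterMatrix κ, IsTitsForm M B Δ := by
  classical
  let exponents (i j : κ) : Set ℕ := {k | 2 ≤ k ∧ B (Δ i) (Δ j) = -Real.cos (Real.pi / k)}
  have hmem {i j : κ} (h : sInf (exponents i j) ≠ 0) : sInf (exponents i j) ∈ exponents i j :=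
    Nat.sInf_mem (Set.nonempty_iff_ne_empty.2 fun hempty => h (by rw [hempty, Nat.sInf_empty]))
  let M : CoxeterMatrix κ :=
    { M := .of fun i j => if i = j then 1 else sInf (exponents i j)
      isSymm := by
        ext i j
        simp only [Matrix.transpose_apply, Matrix.of_apply, exponents, eq_comm (a := j),
          hB.eq (Δ j)]
      diagonal := by simp
      off_diagonal := by
        intro i j hij h
        simp only [Matrix.of_apply, hij, if_false] at h
        have := (hmem (h ▸ one_ne_zero)).1
        omega }
  have hM {i j : κ} (hij : i ≠ j) : M i j = sInf (exponents i j) := if_neg hij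
  refine ⟨M, hB, fun i j h => ?_, fun i j h => ?_⟩
  · by_cases hij : i = j
    · subst hij
      simp [hdiag]
    · rw [hM hij] at h ⊢
      exact (hmem h).2
  · have hij : i ≠ j := by
      rintro rfl
      simp at h
    refine (hoff i j hij).resolve_right fun ⟨k, hk⟩ => ?_
    rw [hM hij] at h
    have := (Nat.sInf_mem (⟨k, hk⟩ : (exponents i j).Nonempty)).1
    omega

theorem two_le_coxeterMatrix {i j : κ} (hij : i ≠ j) (hM : M i j ≠ 0) : 2 ≤ M i j := by
  have := M.off_diagonal i j hij
  omega

namespace IsTitsForm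

theorem apply_self (h : IsTitsForm M B Δ) (i : κ) : B (Δ i) (Δ i) = 1 := by
  rw [h.apply_eq_neg_cos i i (by simp), M.diagonal]
  simp

theorem isLiftable (h : IsTitsForm M B Δ) : M.IsLiftable fun i => formReflection B (Δ i) := by
  intro i j
  by_cases hij : i = j
  · rw [hij, formReflection_mul_self, one_pow]
  by_cases hM : M i j = 0
  · rw [hM, pow_zero]
  · exact formRotation_pow_eq_one h.isSymm (h.apply_self i) (h.apply_self j)
      (two_le_coxeterMatrix hij hM) (h.apply_eq_neg_cos i j hM)

/-- The geometric representation, in which a simple generator acts as the reflection along the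
corresponding basis vector. -/
def geometricRep (h : IsTitsForm M B Δ) (cs : CoxeterSystem M W) : W →* (E ≃ₗ[ℝ] E) :=
  cs.lift ⟨_, h.isLiftable⟩

theorem geometricRep_simple (h : IsTitsForm M B Δ) (cs : CoxeterSystem M W) (i : κ) :
    h.geometricRep cs (cs.simple i) = formReflection B (Δ i) :=
  cs.lift_apply_simple h.isLiftable i

theorem chebyshevU_eval_nonneg (h : IsTitsForm M B Δ) {s t : κ} (hst : s ≠ t) {l : ℤ}
    (hl : -1 ≤ l) (hlM : M s t ≠ 0 → l < M s t) : 0 ≤ (U ℝ l).eval (-B (Δ s) (Δ t)) := by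
  by_cases hM : M s t = 0
  · exact chebyshevU_eval_nonneg_of_one_le (le_neg_of_le_neg (h.apply_le_neg_one s t hM)) hl
  · rw [h.apply_eq_neg_cos s t hM, neg_neg]
    exact chebyshevU_eval_cos_pi_div_nonneg (two_le_coxeterMatrix hst hM) hl (hlM hM)

theorem exists_geometricRep_alternatingWord_apply_eq (h : IsTitsForm M B Δ)
    (cs : CoxeterSystem M W) {s t : κ} (hst : s ≠ t) {k : ℕ} (hk : M s t ≠ 0 → k < M s t) :
    ∃ p q : ℝ, 0 ≤ p ∧ 0 ≤ q ∧
      h.geometricRep cs (cs.wordProd (alternatingWord s t k)) (Δ s) = p • Δ s + q • Δ t := by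
  have hnonneg {l : ℤ} (hl : -1 ≤ l) (hlk : l ≤ k) : 0 ≤ (U ℝ l).eval (-B (Δ s) (Δ t)) :=
    h.chebyshevU_eval_nonneg hst hl fun hM => hlk.trans_lt (mod_cast hk hM)
  have hrot (j : ℕ) := formRotation_zpow_apply_left h.isSymm (h.apply_self s) (h.apply_self t) j
  rw [cs.prod_alternatingWord_eq_mul_pow, map_mul, map_pow, map_mul, h.geometricRep_simple,
    h.geometricRep_simple, ← formRotation, ← zpow_natCast, LinearEquiv.mul_apply, hrot]
  obtain ⟨j, rfl | rfl⟩ := k.even_or_odd'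
  · refine ⟨_, _, hnonneg (l := 2 * j) ?_ ?_, hnonneg (l := 2 * j - 1) ?_ ?_, ?_⟩ <;> try omega
    rw [if_pos (even_two_mul j), map_one, Nat.mul_div_cancel_left j two_pos]
    rfl
  · have hrefl := formReflection_apply_chebyshev_right (a := Δ s) h.isSymm (h.apply_self t)
      (2 * j - 1)
    rw [show (2 * j - 1 + 1 : ℤ) = 2 * j by ring, show (2 * j - 1 + 2 : ℤ) = 2 * j + 1 by ring]
      at hrefl
    refine ⟨_, _, hnonneg (l := 2 * j) ?_ ?_, hnonneg (l := 2 * j + 1) ?_ ?_, ?_⟩ <;> try omega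
    rw [if_neg (Nat.not_even_bit1 j), h.geometricRep_simple, show (2 * j + 1) / 2 = j by omega,
      hrefl]

theorem repr_geometricRep_apply_nonneg (h : IsTitsForm M B Δ) (cs : CoxeterSystem M W) {w : W}
    {s : κ} (hw : ¬cs.IsRightDescent w s) : 0 ≤ Δ.repr (h.geometricRep cs w (Δ s)) := by
  induction hn : cs.length w using Nat.strong_induction_on generalizing w s with
  | _ n ih =>
    by_cases hw₁ : w = 1
    · simp [hw₁]
    obtain ⟨t, ht⟩ := cs.exists_rightDescent_of_ne_one hw₁
    have hst : s ≠ t := by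
      rintro rfl
      exact hw ht
    obtain ⟨v, k, hv, hk, hvs, hvt⟩ := exists_eq_mul_wordProd_alternatingWord cs w (t := t) hw
    have hlt : cs.length v < n := by
      have hk₀ : k ≠ 0 := by
        rintro rfl
        exact hvt (by simpa [hv, alternatingWord] using ht)
      omega
    obtain ⟨p, q, hp, hq, hpq⟩ := h.exists_geometricRep_alternatingWord_apply_eq cs hst
      (lt_of_eq_mul_wordProd_alternatingWord cs hw hv hk)
    rw [hv, map_mul, LinearEquiv.mul_apply, hpq, map_add, map_smul, map_smul, map_add, map_smul,
      map_smul]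
    exact add_nonneg (smul_nonneg hp (ih _ hlt hvs rfl)) (smul_nonneg hq (ih _ hlt hvt rfl))

end IsTitsForm

end TitsForm

section Roots

variable {κ E : Type*} [AddCommGroup E] [Module ℝ E]
variable {M : CoxeterMatrix κ} {B : LinearMap.BilinForm ℝ E} {Δ : Module.Basis κ ℝ E}
variable {w : E ≃ₗ[ℝ] E} {β γ : E}

/-- The group generated by the reflections along the vectors of the basis `Δ`. -/
def reflectionGroup (B : LinearMap.BilinForm ℝ E) (Δ : Module.Basis κ ℝ E) :
    Subgroup (E ≃ₗ[ℝ] E) :=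
  Subgroup.closure (Set.range fun i => formReflection B (Δ i))

/-- The root system: the orbit of the basis `Δ` under its reflection group. -/
def roots (B : LinearMap.BilinForm ℝ E) (Δ : Module.Basis κ ℝ E) : Set E :=
  {γ | ∃ w ∈ reflectionGroup B Δ, ∃ i, w (Δ i) = γ}

/-- The roots with nonnegative coordinates in the basis `Δ`. -/
def posRoots (B : LinearMap.BilinForm ℝ E) (Δ : Module.Basis κ ℝ E) : Set E :=
  {γ ∈ roots B Δ | 0 ≤ Δ.repr γ}

/-- The standard parabolic subsystem of the roots supported on `I`. -/
def parabolicRoots (B : LinearMap.BilinForm ℝ E) (Δ : Module.Basis κ ℝ E) (I : Set κ) : Set E :=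
  {γ ∈ roots B Δ | ↑(Δ.repr γ).support ⊆ I}

/-- The positive roots which `w` maps outside the positive roots; the size of this set is the
length of `w`. -/
def inversionSet (B : LinearMap.BilinForm ℝ E) (Δ : Module.Basis κ ℝ E) (w : E ≃ₗ[ℝ] E) : Set E :=
  {γ ∈ posRoots B Δ | w γ ∉ posRoots B Δ}

/-- The positive roots on which the functional `y` is not positive. That this set is finite means
that `y` lies in the interior of the Tits cone. -/
def nonposRoots (B : LinearMap.BilinForm ℝ E) (Δ : Module.Basis κ ℝ E) (y : Module.Dual ℝ E) :
    Set E :=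
  {γ ∈ posRoots B Δ | y γ ≤ 0}

theorem formReflection_basis_mem_reflectionGroup (B : LinearMap.BilinForm ℝ E)
    (Δ : Module.Basis κ ℝ E) (i : κ) : formReflection B (Δ i) ∈ reflectionGroup B Δ :=
  Subgroup.subset_closure (Set.mem_range_self i)

theorem reflectionGroup_induction_left {p : (E ≃ₗ[ℝ] E) → Prop} (one : p 1)
    (mul_left : ∀ i w, p w → p (formReflection B (Δ i) * w))
    (hw : w ∈ reflectionGroup B Δ) : p w := by
  induction hw using Subgroup.closure_induction_left with
  | one => exact one
  | mul_left x hx w _ ih =>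
    obtain ⟨i, rfl⟩ := hx
    exact mul_left i w ih
  | inv_mul_cancel x hx w _ ih =>
    obtain ⟨i, rfl⟩ := hx
    rw [formReflection_inv]
    exact mul_left i w ih

theorem reflectionGroup_le_isometrySubgroup (hB : B.IsSymm) :
    reflectionGroup B Δ ≤ isometrySubgroup B := by
  rw [reflectionGroup, Subgroup.closure_le]
  rintro _ ⟨i, rfl⟩
  exact formReflection_mem_isometrySubgroup hB (Δ i)

theorem basis_mem_roots (B : LinearMap.BilinForm ℝ E) (Δ : Module.Basis κ ℝ E) (i : κ) :
    Δ i ∈ roots B Δ :=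
  ⟨1, one_mem _, i, rfl⟩

theorem apply_mem_roots (hw : w ∈ reflectionGroup B Δ) (hγ : γ ∈ roots B Δ) : w γ ∈ roots B Δ := by
  obtain ⟨g, hg, i, rfl⟩ := hγ
  exact ⟨w * g, mul_mem hw hg, i, rfl⟩

theorem formReflection_mem_reflectionGroup (hB : B.IsSymm) (hγ : γ ∈ roots B Δ) :
    formReflection B γ ∈ reflectionGroup B Δ := by
  obtain ⟨w, hw, i, rfl⟩ := hγ
  rw [formReflection_map (reflectionGroup_le_isometrySubgroup hB hw)]
  exact mul_mem (mul_mem hw (formReflection_basis_mem_reflectionGroup B Δ i)) (inv_mem hw)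

theorem formRotation_mem_reflectionGroup (hB : B.IsSymm) (hβ : β ∈ roots B Δ)
    (hγ : γ ∈ roots B Δ) : formRotation B β γ ∈ reflectionGroup B Δ :=
  mul_mem (formReflection_mem_reflectionGroup hB hβ) (formReflection_mem_reflectionGroup hB hγ)

theorem repr_formReflection_basis_apply_of_ne (B : LinearMap.BilinForm ℝ E) (v : E) {i j : κ}
    (hij : i ≠ j) : Δ.repr (formReflection B (Δ i) v) j = Δ.repr v j := by
  simp [formReflection_apply, hij]

theorem eq_repr_smul_of_repr_eq_zero {v : E} {i : κ} (hv : ∀ j, i ≠ j → Δ.repr v j = 0) :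
    v = Δ.repr v i • Δ i := by
  apply Δ.repr.injective
  ext j
  by_cases hij : i = j
  · subst hij
    simp
  · simp [hv j hij, hij]

theorem sumCoords_nonneg {v : E} (hv : 0 ≤ Δ.repr v) : 0 ≤ Δ.sumCoords v := by
  rw [Δ.coe_sumCoords]
  exact Finsupp.sum_nonneg' hv

theorem sumCoords_pos {v : E} (hv : 0 ≤ Δ.repr v) (hv₀ : v ≠ 0) : 0 < Δ.sumCoords v := by
  rw [Δ.coe_sumCoords]
  refine Finset.sum_pos' (fun i _ => hv i) ?_
  obtain ⟨i, hi⟩ := Finsupp.support_nonempty_iff.2 (Δ.repr.map_ne_zero_iff.2 hv₀)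
  exact ⟨i, hi, (hv i).lt_of_ne' (Finsupp.mem_support_iff.1 hi)⟩

namespace IsTitsForm

theorem apply_self_of_mem_roots (h : IsTitsForm M B Δ) (hγ : γ ∈ roots B Δ) : B γ γ = 1 := by
  obtain ⟨w, hw, i, rfl⟩ := hγ
  rw [reflectionGroup_le_isometrySubgroup h.isSymm hw, h.apply_self]

theorem ne_zero_of_mem_roots (h : IsTitsForm M B Δ) (hγ : γ ∈ roots B Δ) : γ ≠ 0 := by
  rintro rfl
  simpa using h.apply_self_of_mem_roots hγ

theorem neg_mem_roots (h : IsTitsForm M B Δ) (hγ : γ ∈ roots B Δ) : -γ ∈ roots B Δ := by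
  rw [← formReflection_apply_self (h.apply_self_of_mem_roots hγ)]
  exact apply_mem_roots (formReflection_mem_reflectionGroup h.isSymm hγ) hγ

theorem range_geometricRep {W : Type*} [Group W] (h : IsTitsForm M B Δ) (cs : CoxeterSystem M W) :
    (h.geometricRep cs).range = reflectionGroup B Δ := by
  rw [MonoidHom.range_eq_map, ← cs.subgroup_closure_range_simple, MonoidHom.map_closure,
    ← Set.range_comp, reflectionGroup]
  congr
  funext i
  exact h.geometricRep_simple cs i

theorem repr_nonneg_or_nonpos (h : IsTitsForm M B Δ) (hγ : γ ∈ roots B Δ) :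
    0 ≤ Δ.repr γ ∨ Δ.repr γ ≤ 0 := by
  let cs := M.toCoxeterSystem
  obtain ⟨w, hw, i, rfl⟩ := hγ
  rw [← h.range_geometricRep cs] at hw
  obtain ⟨g, rfl⟩ := hw
  by_cases hg : cs.IsRightDescent g i
  · right
    have hneg := h.repr_geometricRep_apply_nonneg cs
      (cs.isRightDescent_iff_not_isRightDescent_mul.1 hg)
    rwa [map_mul, LinearEquiv.mul_apply, h.geometricRep_simple,
      formReflection_apply_self (h.apply_self i), map_neg, map_neg, neg_nonneg] at hneg
  · exact .inl (h.repr_geometricRep_apply_nonneg cs hg)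

theorem mem_posRoots_or_neg_mem_posRoots (h : IsTitsForm M B Δ) (hγ : γ ∈ roots B Δ) :
    γ ∈ posRoots B Δ ∨ -γ ∈ posRoots B Δ :=
  (h.repr_nonneg_or_nonpos hγ).imp (fun hpos => ⟨hγ, hpos⟩) fun hneg =>
    ⟨h.neg_mem_roots hγ, by rwa [map_neg, neg_nonneg]⟩

theorem mem_posRoots_of_repr_pos (h : IsTitsForm M B Δ) (hγ : γ ∈ roots B Δ) {j : κ}
    (hj : 0 < Δ.repr γ j) : γ ∈ posRoots B Δ :=
  ⟨hγ, (h.repr_nonneg_or_nonpos hγ).resolve_right fun hneg => (hneg j).not_gt hj⟩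

theorem mem_posRoots_of_sumCoords_pos (h : IsTitsForm M B Δ) (hγ : γ ∈ roots B Δ)
    (hpos : 0 < Δ.sumCoords γ) : γ ∈ posRoots B Δ := by
  refine ⟨hγ, (h.repr_nonneg_or_nonpos hγ).resolve_right fun hneg => hpos.not_ge ?_⟩
  rw [← neg_nonneg, ← map_neg]
  exact sumCoords_nonneg (by rwa [map_neg, neg_nonneg])

theorem sumCoords_pos_of_mem_posRoots (h : IsTitsForm M B Δ) (hγ : γ ∈ posRoots B Δ) :
    0 < Δ.sumCoords γ :=
  sumCoords_pos hγ.2 (h.ne_zero_of_mem_roots hγ.1)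

theorem eq_basis_of_repr_eq_zero (h : IsTitsForm M B Δ) (hγ : γ ∈ posRoots B Δ) {i : κ}
    (hi : ∀ j, i ≠ j → Δ.repr γ j = 0) : γ = Δ i := by
  have hsmul := eq_repr_smul_of_repr_eq_zero hi
  have hsq : Δ.repr γ i ^ 2 = 1 := by
    have hγγ := h.apply_self_of_mem_roots hγ.1
    rw [hsmul] at hγγ
    simpa [h.apply_self, sq] using hγγ
  rw [hsmul, (pow_eq_one_iff_of_nonneg (hγ.2 i) two_ne_zero).1 hsq, one_smul]

theorem formReflection_basis_mem_posRoots (h : IsTitsForm M B Δ) {i : κ} (hγ : γ ∈ posRoots B Δ)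
    (hi : γ ≠ Δ i) : formReflection B (Δ i) γ ∈ posRoots B Δ := by
  obtain ⟨j, hij, hj⟩ : ∃ j, i ≠ j ∧ Δ.repr γ j ≠ 0 := by
    by_contra! hzero
    exact hi (h.eq_basis_of_repr_eq_zero hγ hzero)
  refine h.mem_posRoots_of_repr_pos
    (apply_mem_roots (formReflection_basis_mem_reflectionGroup B Δ i) hγ.1) (j := j) ?_
  rw [repr_formReflection_basis_apply_of_ne B γ hij]
  exact (hγ.2 j).lt_of_ne' hj

theorem finite_inversionSet (h : IsTitsForm M B Δ) (hw : w ∈ reflectionGroup B Δ) :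
    (inversionSet B Δ w).Finite := by
  refine reflectionGroup_induction_left (p := fun w => (inversionSet B Δ w).Finite) ?_
    (fun i w ih => ?_) hw
  · exact Set.finite_empty.subset fun γ hγ => hγ.2 hγ.1
  · refine (ih.union (Set.finite_singleton (w⁻¹ (Δ i)))).subset fun γ hγ => ?_
    by_cases hwγ : w γ ∈ posRoots B Δ
    · refine .inr ((LinearEquiv.eq_symm_apply w).2 ?_)
      by_contra hi
      exact hγ.2 (h.formReflection_basis_mem_posRoots hwγ hi)
    · exact .inl ⟨hγ.1, hwγ⟩

end IsTitsForm

end Roots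

section FiniteDihedral

variable {κ E : Type*} [AddCommGroup E] [Module ℝ E]
variable {M : CoxeterMatrix κ} {B : LinearMap.BilinForm ℝ E} {Δ : Module.Basis κ ℝ E}
variable {w : E ≃ₗ[ℝ] E} {y : Module.Dual ℝ E} {β γ : E}

theorem exists_invariant_functional {L : Module.Dual ℝ E} {n : ℕ} (hn : 0 < n) (hw : w ^ n = 1) :
    ∃ y : Module.Dual ℝ E, (∀ v, y (w v) = y v) ∧
      ∀ v, y v ≤ 0 → ∃ k < n, L ((w ^ k) v) ≤ 0 := by
  let y : Module.Dual ℝ E := ∑ k ∈ Finset.range n, L ∘ₗ (w ^ k : E ≃ₗ[ℝ] E)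
  have hy (v : E) : y v = ∑ k ∈ Finset.range n, L ((w ^ k) v) := by
    simp [y, LinearMap.sum_apply]
  refine ⟨y, fun v => ?_, fun v hv => ?_⟩
  · have hshift := (Finset.sum_range_succ' (fun k => L ((w ^ k) v)) n).symm.trans
      (Finset.sum_range_succ (fun k => L ((w ^ k) v)) n)
    rw [hw, pow_zero, add_left_inj] at hshift
    rw [hy, hy, ← hshift]
    simp only [pow_succ, LinearEquiv.mul_apply]
  · by_contra! hpos
    refine hv.not_gt ?_
    rw [hy]
    exact Finset.sum_pos (fun k hk => hpos k (Finset.mem_range.1 hk)) ⟨0, Finset.mem_range.2 hn⟩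

namespace IsTitsForm

theorem eq_basis_of_add_eq_smul (h : IsTitsForm M B Δ) (hβ : β ∈ posRoots B Δ)
    (hγ : γ ∈ posRoots B Δ) {i : κ} {c : ℝ} (hsum : β + γ = c • Δ i) : β = Δ i := by
  refine h.eq_basis_of_repr_eq_zero hβ fun j hij => ?_
  have hj : Δ.repr β j + Δ.repr γ j = 0 := by
    rw [← Finsupp.add_apply, ← map_add, hsum]
    simp [hij]
  exact ((add_eq_zero_iff_of_nonneg (hβ.2 j) (hγ.2 j)).1 hj).1

/-- Almost returning to a simple root forces an exact return: a power of the rotation and its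
inverse both send `Δ i` to positive roots, and the sum of these is a multiple of `Δ i`. -/
theorem exists_formRotation_pow_eq_one (h : IsTitsForm M B Δ) {i : κ} (hβ : β ∈ roots B Δ)
    (hiβ : |B (Δ i) β| < 1) : ∃ n : ℕ, 0 < n ∧ formRotation B (Δ i) β ^ n = 1 := by
  have hunit := h.apply_self_of_mem_roots hβ
  have hi : 0 < Δ.sumCoords (Δ i) := by simp
  obtain ⟨n, hn, hpos, hpos'⟩ :=
    exists_formRotation_zpow_apply_pos h.isSymm (h.apply_self i) hunit hiβ hi
  have hroot {k : ℤ} (hk : 0 < Δ.sumCoords ((formRotation B (Δ i) β ^ k) (Δ i))) :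
      (formRotation B (Δ i) β ^ k) (Δ i) ∈ posRoots B Δ :=
    h.mem_posRoots_of_sumCoords_pos (apply_mem_roots (zpow_mem (formRotation_mem_reflectionGroup
      h.isSymm (basis_mem_roots B Δ i) hβ) k) (basis_mem_roots B Δ i)) hk
  have hfix := h.eq_basis_of_add_eq_smul (hroot hpos) (hroot hpos')
    (formRotation_zpow_apply_add_zpow_neg_apply h.isSymm (h.apply_self i) hunit n)
  refine ⟨2 * n, by positivity, ?_⟩
  exact_mod_cast formRotation_zpow_two_mul_eq_one h.isSymm hfix

theorem exists_functional_apply_eq_zero (h : IsTitsForm M B Δ) {i : κ} (hβ : β ∈ roots B Δ)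
    (hiβ : |B (Δ i) β| < 1) :
    ∃ y : Module.Dual ℝ E, y (Δ i) = 0 ∧ y β = 0 ∧ (nonposRoots B Δ y).Finite := by
  obtain ⟨n, hn, hpow⟩ := h.exists_formRotation_pow_eq_one hβ hiβ
  obtain ⟨y, hinv, hnonpos⟩ := exists_invariant_functional (L := Δ.sumCoords) hn hpow
  obtain ⟨hi, hβ₀⟩ := apply_eq_zero_of_formRotation_invariant h.isSymm (h.apply_self i)
    (h.apply_self_of_mem_roots hβ) ((sq_lt_one_iff_abs_lt_one _).2 hiβ).ne hinv
  refine ⟨y, hi, hβ₀, ?_⟩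
  have hfin := (Set.finite_lt_nat n).biUnion fun k _ => h.finite_inversionSet (pow_mem
    (formRotation_mem_reflectionGroup h.isSymm (basis_mem_roots B Δ i) hβ) k)
  refine hfin.subset fun γ hγ => ?_
  obtain ⟨k, hk, hneg⟩ := hnonpos γ hγ.2
  exact Set.mem_biUnion hk
    ⟨hγ.1, fun hpos => (h.sumCoords_pos_of_mem_posRoots hpos).not_ge hneg⟩

end IsTitsForm

end FiniteDihedral

section Chambers

variable {κ E : Type*} [AddCommGroup E] [Module ℝ E]
variable {M : CoxeterMatrix κ} {B : LinearMap.BilinForm ℝ E} {Δ : Module.Basis κ ℝ E}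
variable {y : Module.Dual ℝ E} {α β γ : E}

theorem apply_eq_zero_of_support_subset {v : E} (hv : ↑(Δ.repr v).support ⊆ {i | y (Δ i) = 0}) :
    y v = 0 := by
  rw [← Δ.linearCombination_repr v, Finsupp.linearCombination_apply, Finsupp.sum, map_sum]
  exact Finset.sum_eq_zero fun i hi => by rw [map_smul, hv hi, smul_zero]

theorem support_subset_of_apply_eq_zero (hy : ∀ i, 0 ≤ y (Δ i)) {v : E} (hv : 0 ≤ Δ.repr v)
    (hyv : y v = 0) : ↑(Δ.repr v).support ⊆ {i | y (Δ i) = 0} := by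
  rw [← Δ.linearCombination_repr v, Finsupp.linearCombination_apply, Finsupp.sum, map_sum,
    Finset.sum_eq_zero_iff_of_nonneg fun i _ => by
      rw [map_smul]; exact smul_nonneg (hv i) (hy i)] at hyv
  intro i hi
  have hi₀ := hyv i hi
  rw [map_smul, smul_eq_mul] at hi₀
  exact (mul_eq_zero.1 hi₀).resolve_left (Finsupp.mem_support_iff.1 hi)

namespace IsTitsForm

theorem mem_parabolicRoots_of_apply_eq_zero (h : IsTitsForm M B Δ) (hy : ∀ i, 0 ≤ y (Δ i))
    (hγ : γ ∈ roots B Δ) (hyγ : y γ = 0) : γ ∈ parabolicRoots B Δ {i | y (Δ i) = 0} := by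
  refine ⟨hγ, ?_⟩
  obtain hpos | hneg := h.mem_posRoots_or_neg_mem_posRoots hγ
  · exact support_subset_of_apply_eq_zero hy hpos.2 hyγ
  · have hsub := support_subset_of_apply_eq_zero hy hneg.2 (by rw [map_neg, hyγ, neg_zero])
    rwa [map_neg, Finsupp.support_neg] at hsub

theorem finite_parabolicRoots (h : IsTitsForm M B Δ) (hfin : (nonposRoots B Δ y).Finite) :
    (parabolicRoots B Δ {i | y (Δ i) = 0}).Finite := by
  refine (hfin.union (hfin.preimage neg_injective.injOn)).subset fun γ hγ => ?_
  have hyγ : y γ = 0 := apply_eq_zero_of_support_subset hγ.2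
  exact (h.mem_posRoots_or_neg_mem_posRoots hγ.1).imp (fun hpos => ⟨hpos, hyγ.le⟩)
    fun hneg => ⟨hneg, by rw [map_neg, hyγ, neg_zero]⟩

theorem image_nonposRoots_comp_subset (h : IsTitsForm M B Δ) {i : κ} (hi : y (Δ i) < 0) :
    formReflection B (Δ i) '' nonposRoots B Δ (y ∘ₗ (formReflection B (Δ i) : E →ₗ[ℝ] E)) ⊆
      nonposRoots B Δ y \ {Δ i} := by
  rintro _ ⟨γ, ⟨hγ, hyγ⟩, rfl⟩
  have hself := formReflection_apply_self (h.apply_self i)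
  have hγi : γ ≠ Δ i := by
    rintro rfl
    rw [LinearMap.comp_apply, LinearEquiv.coe_coe, hself, map_neg] at hyγ
    linarith
  refine ⟨⟨h.formReflection_basis_mem_posRoots hγ hγi, hyγ⟩, fun hsγ => ?_⟩
  have hneg : γ = -Δ i := by
    rw [← formReflection_formReflection_apply B (Δ i) γ, hsγ, hself]
  have hrepr : Δ.repr γ i = -1 := by simp [hneg]
  exact (hγ.2 i).not_gt (hrepr ▸ neg_one_lt_zero)

/-- Reflecting in a simple root on which `y` is negative removes that root from `nonposRoots`, so
this process stops, and then `y` has been moved into the fundamental chamber. -/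
theorem exists_dominant_translate (h : IsTitsForm M B Δ) (hfin : (nonposRoots B Δ y).Finite) :
    ∃ w ∈ reflectionGroup B Δ, (∀ i, 0 ≤ y (w (Δ i))) ∧
      (nonposRoots B Δ (y ∘ₗ (w : E →ₗ[ℝ] E))).Finite := by
  induction hn : (nonposRoots B Δ y).ncard using Nat.strong_induction_on generalizing y with
  | _ n ih =>
    by_cases hdom : ∀ i, 0 ≤ y (Δ i)
    · exact ⟨1, one_mem _, hdom, hfin⟩
    push Not at hdom
    obtain ⟨i, hi⟩ := hdom
    let s := formReflection B (Δ i)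
    have hsub := h.image_nonposRoots_comp_subset hi
    have himage := hfin.sdiff.subset hsub
    have hmem : Δ i ∈ nonposRoots B Δ y := ⟨⟨basis_mem_roots B Δ i, by simp⟩, hi.le⟩
    have hlt : (nonposRoots B Δ (y ∘ₗ (s : E →ₗ[ℝ] E))).ncard < n := by
      rw [← hn, ← Set.ncard_image_of_injective _ s.injective]
      exact (Set.ncard_le_ncard hsub hfin.sdiff).trans_lt
        (Set.ncard_sdiff_singleton_lt_of_mem hmem hfin)
    obtain ⟨w, hw, hwdom, hwfin⟩ := ih _ hlt (himage.of_finite_image s.injective.injOn) rfl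
    exact ⟨s * w, mul_mem (formReflection_basis_mem_reflectionGroup B Δ i) hw, hwdom, hwfin⟩

theorem exists_basis_mem_finite_parabolicRoots (h : IsTitsForm M B Δ) {i : κ} (hβ : β ∈ roots B Δ)
    (hiβ : |B (Δ i) β| < 1) : ∃ w ∈ reflectionGroup B Δ, ∃ I : Set κ,
      (parabolicRoots B Δ I).Finite ∧ w (Δ i) ∈ parabolicRoots B Δ I ∧
        w β ∈ parabolicRoots B Δ I := by
  obtain ⟨y, hi, hβ₀, hfin⟩ := h.exists_functional_apply_eq_zero hβ hiβ
  obtain ⟨w, hw, hdom, hwfin⟩ := h.exists_dominant_translate hfin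
  have hmem {γ : E} (hγ : γ ∈ roots B Δ) (hyγ : y γ = 0) :=
    h.mem_parabolicRoots_of_apply_eq_zero (y := y ∘ₗ (w : E →ₗ[ℝ] E)) hdom
      (apply_mem_roots (inv_mem hw) hγ) ((congrArg y (w.apply_symm_apply γ)).trans hyγ)
  exact ⟨w⁻¹, inv_mem hw, _, h.finite_parabolicRoots hwfin, hmem (basis_mem_roots B Δ i) hi,
    hmem hβ hβ₀⟩

theorem exists_mem_finite_parabolicRoots (h : IsTitsForm M B Δ) (hα : α ∈ roots B Δ)
    (hβ : β ∈ roots B Δ) (hαβ : |B α β| < 1) : ∃ w ∈ reflectionGroup B Δ, ∃ I : Set κ,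
      (parabolicRoots B Δ I).Finite ∧ w α ∈ parabolicRoots B Δ I ∧ w β ∈ parabolicRoots B Δ I := by
  obtain ⟨g, hg, i, rfl⟩ := hα
  have hgβ : B (Δ i) (g⁻¹ β) = B (g (Δ i)) β := by
    rw [← reflectionGroup_le_isometrySubgroup h.isSymm hg]
    exact congrArg _ (g.apply_symm_apply β)
  obtain ⟨w, hw, I, hI, hwi, hwβ⟩ := h.exists_basis_mem_finite_parabolicRoots
    (apply_mem_roots (inv_mem hg) hβ) (hgβ ▸ hαβ)
  refine ⟨w * g⁻¹, mul_mem hw (inv_mem hg), I, hI, ?_, hwβ⟩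
  rwa [LinearEquiv.mul_apply, LinearEquiv.coe_inv, LinearEquiv.symm_apply_apply]

end IsTitsForm

end Chambers

section FiniteValues

variable {κ E : Type*} [AddCommGroup E] [Module ℝ E]

theorem statement3_general [Finite κ] (B : LinearMap.BilinForm ℝ E) (Δ : Module.Basis κ ℝ E)
    (hsymm : ∀ u v : E, B u v = B v u)
    (hdiag : ∀ i, B (Δ i) (Δ i) = 1)
    (hoff : ∀ i j, i ≠ j → B (Δ i) (Δ j) ≤ -1 ∨
      ∃ k : ℕ, 2 ≤ k ∧ B (Δ i) (Δ j) = -Real.cos (Real.pi / (k : ℝ))) :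
    {t : ℝ | |t| < 1 ∧ ∃ α ∈ roots B Δ, ∃ β ∈ roots B Δ, B α β = t}.Finite := by
  obtain ⟨M, h⟩ := exists_isTitsForm ⟨hsymm⟩ hdiag hoff
  refine ((Set.toFinite {I | (parabolicRoots B Δ I).Finite}).biUnion fun I hI =>
    Set.Finite.image2 (fun α β => B α β) hI hI).subset ?_
  rintro _ ⟨hlt, α, hα, β, hβ, rfl⟩
  obtain ⟨w, hw, I, hI, hwα, hwβ⟩ := h.exists_mem_finite_parabolicRoots hα hβ hlt
  exact Set.mem_biUnion hI
    ⟨w α, hwα, w β, hwβ, reflectionGroup_le_isometrySubgroup h.isSymm hw α β⟩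

variable {F : Type*} [NormedAddCommGroup F] [NormedSpace ℝ F]

theorem cox_eq_reflectionGroup (B : LinearMap.BilinForm ℝ F) (Δ : Module.Basis κ ℝ F) :
    cox B Δ = reflectionGroup B Δ := by
  refine congrArg Subgroup.closure (Set.ext fun e => exists_congr fun i => ?_)
  simp only [← formReflection_apply, ← LinearEquiv.ext_iff, eq_comm]

theorem Phi_eq_roots (B : LinearMap.BilinForm ℝ F) (Δ : Module.Basis κ ℝ F) :
    Phi B Δ = roots B Δ := by
  rw [Phi, cox_eq_reflectionGroup, roots]

end FiniteValues

/-- The set `{B(α,ρ) : α ∈ Δ, ρ ∈ Φ⁺, |B(α,ρ)| < 1}` is finite. -/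
theorem statement3 (B : LinearMap.BilinForm ℝ V) (Δ : Module.Basis ι ℝ V)
    (hsymm : ∀ u v : V, B u v = B v u)
    (hdiag : ∀ i : ι, B (Δ i) (Δ i) = 1)
    (hoff : ∀ i j : ι, i ≠ j → B (Δ i) (Δ j) ≤ -1 ∨
      ∃ k : ℕ, 2 ≤ k ∧ B (Δ i) (Δ j) = -Real.cos (Real.pi / (k : ℝ))) :
    Set.Finite { t : ℝ | |t| < 1 ∧ ∃ i : ι, ∃ ρ ∈ posPhi B Δ, B (Δ i) ρ = t } :=
  (statement3_general B Δ hsymm hdiag hoff).subset fun _ ⟨ht, i, ρ, hρ, hBρ⟩ =>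
    ⟨ht, Δ i, basis_mem_roots B Δ i, ρ, Phi_eq_roots B Δ ▸ hρ.1, hBρ⟩
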